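/- Let H ⊆ (ℙ¹)ⁿ be an irreducible hypersurface and j ∈ {1,…,n} be such that p_j(H) ≠ (ℙ¹)^{n-1}. Then p_j(H) ⊆ (ℙ¹)^{n-1} is an irreducible hypersurface and H = p_j^{-1}(p_j(H)); in particular H is isomorphic to the product of ℙ¹ with an irreducible hypersurface of (ℙ¹)^{n-1}. -/

import Mathlib

/-!
Abstract framework for "Hypersurfaces in products of the projective line
containing generic sequences of small height" (Mavraki–Schmidt–Wilms).

`K` is a number field or the function field of a smooth projective curve over
an algebraically closed field, with a fixed algebraic closure `K̄`.  We work
throughout with the sets of `K̄`-points of the powers `(ℙ¹)^m` of the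
projective line, equipped with their Zariski topologies.
-/

open Set Filter Topology

/-- `H` is an irreducible hypersurface in the (irreducible) ambient space:
a proper closed irreducible subset which is maximal among proper closed
irreducible subsets.  For the Zariski topology on a power of `ℙ¹` this is
exactly the notion of an irreducible closed subvariety of codimension one. -/
def IsHypersurface {X : Type*} (τ : TopologicalSpace X) (H : Set X) : Prop :=
  letI := τ
  IsClosed H ∧ IsIrreducible H ∧ H ≠ Set.univ ∧
    ∀ C : Set X, IsClosed C → IsIrreducible C → H ⊆ C → C ≠ Set.univ → C = H

/-- A sequence `x` is generic in `H` if none of its subsequences is contained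
in a proper algebraic subvariety of `H`; equivalently, every proper closed
subset of `H` contains `x ℓ` for only finitely many indices `ℓ`. -/
def IsGenericSequence {X : Type*} (τ : TopologicalSpace X) (H : Set X) (x : ℕ → X) : Prop :=
  letI := τ
  (∀ ℓ, x ℓ ∈ H) ∧
    ∀ C : Set X, IsClosed C → C ⊆ H → C ≠ H → {ℓ | x ℓ ∈ C}.Finite

/-- The set `P = ℙ¹(K̄)` of `K̄`-points of the projective line, together with
the Zariski topologies on all of its finite powers `(ℙ¹)^m(K̄)`.  The powers
are irreducible, points are closed, and all reindexing maps (in particular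
all coordinate projections `π_I` and `p_j`) are morphisms of projective
varieties, hence continuous and (by properness) closed. -/
structure P1Powers where
  /-- the points `ℙ¹(K̄)` -/
  P : Type
  /-- the Zariski topology on `(ℙ¹)^m(K̄)` -/
  top : ∀ m : ℕ, TopologicalSpace (Fin m → P)
  irred : ∀ m : ℕ, @IrreducibleSpace _ (top m)
  t1 : ∀ m : ℕ, @T1Space _ (top m)
  reindex_continuous : ∀ {m k : ℕ} (φ : Fin k → Fin m),
    @Continuous _ _ (top m) (top k) (fun x => x ∘ φ)
  reindex_isClosedMap : ∀ {m k : ℕ} (φ : Fin k → Fin m),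
    @IsClosedMap _ _ (top m) (top k) (fun x => x ∘ φ)

/-!
A section of a closed map is continuous as soon as its range is closed. The fibres `{x | x j = t}`
are closed and are the ranges of sections of `p_j`, so these sections are continuous and `p_j` is an
open map; its fibres are images of `ℙ¹`, hence irreducible. Therefore the preimage under `p_j` of an
irreducible closed set is irreducible, and a proper irreducible closed `C ⊇ p_j(H)` pulls back to a
proper irreducible closed set containing `H`, which must be `H` by maximality.
-/

theorem continuous_of_leftInverse_of_isClosedMap {X Y : Type*} [TopologicalSpace X]
    [TopologicalSpace Y] {f : X → Y} {s : Y → X} (hf : IsClosedMap f)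
    (hs : Function.LeftInverse f s) (hrange : IsClosed (range s)) : Continuous s := by
  refine continuous_iff_isClosed.2 fun A hA => ?_
  rw [← hs.image_image (s ⁻¹' A), image_preimage_eq_inter_range]
  exact hf _ (hA.inter hrange)

theorem isOpenMap_snd_of_isClosed_slice {X Y Z : Type*} [TopologicalSpace X] [TopologicalSpace Y]
    (e : X ≃ Z × Y) (hclosed : IsClosedMap fun x => (e x).2)
    (hslice : ∀ z, IsClosed {x | (e x).1 = z}) : IsOpenMap fun x => (e x).2 := by
  have continuous_slice (z : Z) : Continuous fun y => e.symm (z, y) := by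
    refine continuous_of_leftInverse_of_isClosedMap hclosed (fun y => by simp) ?_
    convert hslice z
    ext x
    simp [e.symm_apply_eq, Prod.ext_iff, eq_comm]
  exact IsOpenMap.of_sections fun x =>
    ⟨fun y => e.symm ((e x).1, y), (continuous_slice _).continuousAt, by simp, fun y => by simp⟩

namespace IsHypersurface

variable {X Y : Type*} [τX : TopologicalSpace X] [τY : TopologicalSpace Y] {f : X → Y} {H : Set X}

theorem preimage_eq_of_image_subset (hH : IsHypersurface τX H) (hcont : Continuous f)
    (hopen : IsOpenMap f) (hsurj : Function.Surjective f)
    (hfiber : ∀ y, IsPreirreducible (f ⁻¹' {y})) {C : Set Y} (hC : IsClosed C)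
    (hCirr : IsIrreducible C) (hHC : f '' H ⊆ C) (hCne : C ≠ univ) : f ⁻¹' C = H := by
  obtain ⟨-, -, -, hmax⟩ := hH
  have hpreimage_irr : IsIrreducible (f ⁻¹' C) :=
    hCirr.preimage_of_isPreirreducible_fiber f hopen hfiber
      (by simpa [hsurj.range_eq] using hCirr.nonempty)
  have hpreimage_ne : f ⁻¹' C ≠ univ := fun h =>
    hCne (hsurj.preimage_injective (h.trans preimage_univ.symm))
  exact hmax _ (hC.preimage hcont) hpreimage_irr (image_subset_iff.1 hHC) hpreimage_ne

theorem preimage_image_eq (hH : IsHypersurface τX H) (hcont : Continuous f)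
    (hclosed : IsClosedMap f) (hopen : IsOpenMap f) (hsurj : Function.Surjective f)
    (hfiber : ∀ y, IsPreirreducible (f ⁻¹' {y})) (hne : f '' H ≠ univ) : f ⁻¹' (f '' H) = H :=
  hH.preimage_eq_of_image_subset hcont hopen hsurj hfiber (hclosed H hH.1)
    (hH.2.1.image f hcont.continuousOn) subset_rfl hne

theorem image (hH : IsHypersurface τX H) (hcont : Continuous f) (hclosed : IsClosedMap f)
    (hopen : IsOpenMap f) (hsurj : Function.Surjective f)
    (hfiber : ∀ y, IsPreirreducible (f ⁻¹' {y})) (hne : f '' H ≠ univ) :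
    IsHypersurface τY (f '' H) := by
  refine ⟨hclosed H hH.1, hH.2.1.image f hcont.continuousOn, hne, fun C hC hCirr hHC hCne => ?_⟩
  rw [← hH.preimage_eq_of_image_subset hcont hopen hsurj hfiber hC hCirr hHC hCne,
    image_preimage_eq C hsurj]

end IsHypersurface

/-- `e` is only a bijection of sets: for varieties, the Zariski topology of the product is finer
than the product topology, so one cannot ask for a homeomorphism. -/
theorem hypersurface_of_nonsurjective_projection_general {X Y Z : Type*}
    [τX : TopologicalSpace X] [τY : TopologicalSpace Y] (e : X ≃ Z × Y)
    (hcont : Continuous fun x => (e x).2) (hclosed : IsClosedMap fun x => (e x).2)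
    (hslice : ∀ z, IsClosed {x | (e x).1 = z})
    (hfiber : ∀ y, IsPreirreducible ((fun x => (e x).2) ⁻¹' {y}))
    {H : Set X} (hH : IsHypersurface τX H) (hne : (fun x => (e x).2) '' H ≠ univ) :
    IsHypersurface τY ((fun x => (e x).2) '' H) ∧
      H = (fun x => (e x).2) ⁻¹' ((fun x => (e x).2) '' H) ∧
      BijOn e H (univ ×ˢ ((fun x => (e x).2) '' H)) := by
  have hopen := isOpenMap_snd_of_isClosed_slice e hclosed hslice
  obtain ⟨x, -⟩ := hH.2.1.nonempty
  have hsurj : Function.Surjective fun x => (e x).2 := fun y => ⟨e.symm ((e x).1, y), by simp⟩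
  have hpreimage := hH.preimage_image_eq hcont hclosed hopen hsurj hfiber hne
  refine ⟨hH.image hcont hclosed hopen hsurj hfiber hne, hpreimage.symm, ?_⟩
  exact e.bijOn fun x => (and_iff_right trivial).trans (Set.ext_iff.1 hpreimage x)

namespace P1Powers

attribute [local instance] P1Powers.top P1Powers.irred P1Powers.t1

theorem isClosed_setOf_apply_eq (S : P1Powers) {m : ℕ} (i : Fin m) (t : S.P) :
    IsClosed {x : Fin m → S.P | x i = t} := by
  convert (isClosed_singleton (x := fun _ : Fin 1 => t)).preimage
    (S.reindex_continuous fun _ : Fin 1 => i)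
  ext x
  simp [funext_iff]

theorem isPreirreducible_fiber (S : P1Powers) {n : ℕ} (j : Fin (n + 1)) (y : Fin n → S.P) :
    IsPreirreducible ((fun x : Fin (n + 1) → S.P => x ∘ j.succAbove) ⁻¹' {y}) := by
  let s (u : Fin 1 → S.P) : Fin (n + 1) → S.P := j.insertNth (u 0) y
  have range_eq : range s = (fun x => x ∘ j.succAbove) ⁻¹' {y} := by
    ext x
    refine ⟨?_, ?_⟩
    · rintro ⟨u, rfl⟩
      exact Fin.insertNth_comp_succAbove j (u 0) y
    · rintro rfl
      exact ⟨fun _ => x j, Fin.insertNth_self_removeNth j x⟩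
  have leftInverse_s : Function.LeftInverse (fun x => x ∘ fun _ : Fin 1 => j) s := fun u => by
    ext i
    simp [s, Subsingleton.elim i 0]
  have continuous_s : Continuous s :=
    continuous_of_leftInverse_of_isClosedMap (S.reindex_isClosedMap _) leftInverse_s
      (range_eq ▸ isClosed_singleton.preimage (S.reindex_continuous j.succAbove))
  rw [← range_eq, ← image_univ]
  exact PreirreducibleSpace.isPreirreducible_univ.image s continuous_s.continuousOn

end P1Powers

/-- If `H ⊆ (ℙ¹)^n` is an irreducible hypersurface and `j` is such that
`p_j(H) ≠ (ℙ¹)^{n-1}`, then `p_j(H)` is an irreducible hypersurface of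
`(ℙ¹)^{n-1}` and `H = p_j⁻¹(p_j(H))`; in particular `H` is isomorphic to the
product of `ℙ¹` with the irreducible hypersurface `p_j(H)` of `(ℙ¹)^{n-1}`,
via the canonical map `x ↦ (x j, p_j x)`.
(Here the ambient number of factors is `n + 1`.) -/
theorem hypersurface_of_nonsurjective_projection
    (n : ℕ) (S : P1Powers) (H : Set (Fin (n + 1) → S.P))
    (hH : IsHypersurface (S.top (n + 1)) H)
    (j : Fin (n + 1))
    (hne : (fun x : Fin (n + 1) → S.P => x ∘ j.succAbove) '' H ≠ Set.univ) :
    IsHypersurface (S.top n) ((fun x : Fin (n + 1) → S.P => x ∘ j.succAbove) '' H) ∧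
    H = (fun x : Fin (n + 1) → S.P => x ∘ j.succAbove) ⁻¹'
          ((fun x : Fin (n + 1) → S.P => x ∘ j.succAbove) '' H) ∧
    Set.BijOn (fun x : Fin (n + 1) → S.P => (x j, x ∘ j.succAbove)) H
      (Set.univ ×ˢ ((fun x : Fin (n + 1) → S.P => x ∘ j.succAbove) '' H)) := by
  let := S.top
  exact hypersurface_of_nonsurjective_projection_general
    (Fin.insertNthEquiv (fun _ => S.P) j).symm (S.reindex_continuous j.succAbove)
    (S.reindex_isClosedMap j.succAbove) (S.isClosed_setOf_apply_eq j)
    (S.isPreirreducible_fiber j) hH hne
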